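/- arXiv:2205.03155 — 5 statements merged into one kernel-verified Lean document; each statement's English description precedes it below -/
import Mathlib

section
/- Let F be a field of characteristic 2 and let L be a Lie algebra over F with a Z₂-grading L = L₀ ⊕ L₁. Let C denote the F-linear span in End(L) of {(ad x)² : x ∈ L₁}, and let S = ad(L) + C as a subspace of End(L). Then S is closed under the commutator bracket of End(L), i.e. S is a Lie subalgebra of the general linear Lie algebra gl(L). -/
/-!
In an associative algebra of characteristic `p`, left and right multiplication by `x` commute, so
the Frobenius identity applied to their difference gives `ad (x ^ p) = (ad x) ^ p`. Hence, for a Lie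
subalgebra `K` and `x ∈ K`, bracketing with `x ^ p` is a `p`-fold bracket with `x ∈ K`; its first
step already takes the normalizer of `K` into `K`. So `p`-th powers of elements of `K` normalize
`K`, and bracket with one another into `K`. Take `K = ad L` in `End L`.
-/

theorem sub_pow_prime_of_commute {A : Type*} [Ring A] {p : ℕ} (hp : p.Prime)
    (p_eq_zero : (p : A) = 0) {a b : A} (h : Commute a b) : (a - b) ^ p = a ^ p - b ^ p := by
  cases subsingleton_or_nontrivial A
  · exact Subsingleton.elim _ _
  · have : Fact p.Prime := ⟨hp⟩
    have : CharP A p := (CharP.charP_iff_prime_eq_zero hp).2 p_eq_zero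
    exact sub_pow_char_of_commute p h

section

attribute [local instance 100] LieRing.ofAssociativeRing

variable (R : Type*) [CommRing R] (p : ℕ) [Fact p.Prime] [CharP R p]
  {A : Type*} [Ring A] [Algebra R A]

theorem ad_pow_char (x : A) : LieAlgebra.ad R A (x ^ p) = LieAlgebra.ad R A x ^ p := by
  simp only [LieAlgebra.ad_eq_lmul_left_sub_lmul_right, Pi.sub_apply]
  have p_eq_zero : (p : Module.End R A) = 0 := by
    rw [← map_natCast (algebraMap R _), CharP.cast_eq_zero, map_zero]
  rw [sub_pow_prime_of_commute Fact.out p_eq_zero (LinearMap.commute_mulLeft_right x x),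
    LinearMap.pow_mulLeft, LinearMap.pow_mulRight]

variable {R} {K : LieSubalgebra R A}

theorem lie_pow_char_mem_of_mem_normalizer {x n : A} (hx : x ∈ K) (hn : n ∈ K.normalizer) :
    ⁅n, x ^ p⁆ ∈ K := by
  have ad_pow_mem (k : ℕ) : (LieAlgebra.ad R A x ^ (k + 1)) n ∈ K := by
    induction k with
    | zero => simpa using (K.mem_normalizer_iff' n).1 hn x hx
    | succ k ih =>
      rw [pow_succ', Module.End.mul_apply]
      exact K.lie_mem hx ih
  obtain ⟨k, rfl⟩ := Nat.exists_eq_succ_of_ne_zero (Fact.out : p.Prime).ne_zero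
  rw [← lie_skew, ← LieAlgebra.ad_apply R, ad_pow_char R]
  exact K.neg_mem (ad_pow_mem k)

theorem pow_char_mem_normalizer {x : A} (hx : x ∈ K) : x ^ p ∈ K.normalizer :=
  (K.mem_normalizer_iff' _).2 fun _ hy ↦
    lie_pow_char_mem_of_mem_normalizer p hx (K.le_normalizer hy)

theorem sup_span_pow_char_le_normalizer :
    K.toSubmodule ⊔ Submodule.span R ((· ^ p) '' (K : Set A)) ≤ K.normalizer.toSubmodule :=
  sup_le K.le_normalizer <| Submodule.span_le.2 <| by
    rintro _ ⟨x, hx, rfl⟩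
    exact pow_char_mem_normalizer p hx

theorem lie_mem_of_mem_sup_span_pow_char {a b : A}
    (ha : a ∈ K.toSubmodule ⊔ Submodule.span R ((· ^ p) '' (K : Set A)))
    (hb : b ∈ K.toSubmodule ⊔ Submodule.span R ((· ^ p) '' (K : Set A))) : ⁅a, b⁆ ∈ K := by
  have a_mem_normalizer : a ∈ K.normalizer := sup_span_pow_char_le_normalizer p ha
  have sup_le_comap_ad : K.toSubmodule ⊔ Submodule.span R ((· ^ p) '' (K : Set A)) ≤
      K.toSubmodule.comap (LieAlgebra.ad R A a) :=
    sup_le ((K.mem_normalizer_iff a).1 a_mem_normalizer) <| Submodule.span_le.2 <| by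
      rintro _ ⟨x, hx, rfl⟩
      exact lie_pow_char_mem_of_mem_normalizer p hx a_mem_normalizer
  exact sup_le_comap_ad hb

theorem adL_plus_squares_closed_under_bracket_general
    {L : Type*} [LieRing L] [LieAlgebra R L] (s : Set L) {f g : Module.End R L}
    (hf : f ∈ (LieAlgebra.ad R L).range.toSubmodule ⊔
      Submodule.span R {f | ∃ x ∈ s, f = LieAlgebra.ad R L x ^ p})
    (hg : g ∈ (LieAlgebra.ad R L).range.toSubmodule ⊔
      Submodule.span R {f | ∃ x ∈ s, f = LieAlgebra.ad R L x ^ p}) :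
    ⁅f, g⁆ ∈ (LieAlgebra.ad R L).range := by
  have powers_subset : {f | ∃ x ∈ s, f = LieAlgebra.ad R L x ^ p} ⊆
      (· ^ p) '' ((LieAlgebra.ad R L).range : Set (Module.End R L)) := by
    rintro _ ⟨x, -, rfl⟩
    exact ⟨_, LieHom.mem_range_self _ x, rfl⟩
  have sup_le_sup_powers := sup_le_sup_left (Submodule.span_mono (R := R) powers_subset)
    (LieAlgebra.ad R L).range.toSubmodule
  exact lie_mem_of_mem_sup_span_pow_char p (sup_le_sup_powers hf) (sup_le_sup_powers hg)

end

/-- Let `L` be a Lie algebra over a field `F` of characteristic `2` with a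
`ℤ₂`-grading `L = L₀ ⊕ L₁`. With `C` the span of `{(ad x)² : x ∈ L₁}` in
`End(L)` and `S = ad(L) + C`, the subspace `S` is closed under the commutator
bracket, i.e. it is a Lie subalgebra of `gl(L)`. -/
theorem adL_plus_squares_closed_under_bracket
    {F : Type*} [Field F] [CharP F 2] {L : Type*} [LieRing L] [LieAlgebra F L]
    (L₀ L₁ : Submodule F L)
    (h_inf : L₀ ⊓ L₁ = ⊥) (h_sup : L₀ ⊔ L₁ = ⊤)
    (h00 : ∀ x ∈ L₀, ∀ y ∈ L₀, ⁅x, y⁆ ∈ L₀)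
    (h01 : ∀ x ∈ L₀, ∀ y ∈ L₁, ⁅x, y⁆ ∈ L₁)
    (h11 : ∀ x ∈ L₁, ∀ y ∈ L₁, ⁅x, y⁆ ∈ L₀)
    (C : Submodule F (Module.End F L))
    (hC : C = Submodule.span F {f | ∃ x ∈ L₁, f = (LieAlgebra.ad F L x) ^ 2})
    (S : Submodule F (Module.End F L))
    (hS : S = LinearMap.range (LieAlgebra.ad F L : L →ₗ[F] Module.End F L) ⊔ C) :
    ∀ f ∈ S, ∀ g ∈ S, ⁅f, g⁆ ∈ S := by
  subst hS hC
  exact fun f hf g hg ↦ Submodule.mem_sup_left <|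
    adL_plus_squares_closed_under_bracket_general 2 (L₁ : Set L) hf hg
end

section
/- Let F be a field of characteristic 2 and let L be a Lie algebra over F with a Z₂-grading L = L₀ ⊕ L₁. Let C denote the F-linear span in End(L) of {(ad x)² : x ∈ L₁}, and let S = ad(L) + C. Then ⁅S, S⁆ ⊆ ad(L); in particular ad(L) is a Lie ideal of S and the quotient Lie algebra S / ad(L) is abelian. -/
/-!
In characteristic `p`, left and right multiplication by `a` commute, so `ad (a ^ p ^ n)` is the
iterated derivation `(ad a) ^ p ^ n`. If `a` lies in a Lie subalgebra `K` of an associative algebra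
and `f` normalizes `K`, then already `⁅a, f⁆ ∈ K`, hence `⁅a ^ p ^ n, f⁆ ∈ K`. Taking `f ∈ K` shows
that the powers `a ^ p ^ n` normalize `K`, so they are admissible as `f` in turn: the commutator of
any two of them lies in `K`. The theorem is the case `K = ad L`, `p = 2`.
-/

section pEnvelope

attribute [local instance] LieRing.ofAssociativeRing

variable {R A : Type*} [CommRing R] [Ring A] [Algebra R A] (p : ℕ)

/-- The span of the powers `a ^ p ^ n` of the elements `a` of a Lie subalgebra `K` of an associative
algebra. When `p` is the prime characteristic, this is the `p`-envelope of `K`, the smallest Lie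
subalgebra containing `K` and closed under `p`-th powers. It is encoded as a submodule because its
closure under brackets depends on the characteristic. -/
def pEnvelope (K : LieSubalgebra R A) : Submodule R A :=
  Submodule.span R {b | ∃ a ∈ K, ∃ n : ℕ, b = a ^ p ^ n}

variable {K : LieSubalgebra R A} {a f g : A}

theorem pow_mem_pEnvelope (ha : a ∈ K) (n : ℕ) : a ^ p ^ n ∈ pEnvelope p K :=
  Submodule.subset_span ⟨a, ha, n, rfl⟩

theorem toSubmodule_le_pEnvelope : K.toSubmodule ≤ pEnvelope p K := fun a ha => by
  simpa only [pow_zero, pow_one] using pow_mem_pEnvelope p ha 0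

theorem range_sup_span_pow_le_pEnvelope {L : Type*} [LieRing L] [LieAlgebra R L]
    (φ : L →ₗ⁅R⁆ A) (X : Set L) :
    LinearMap.range (φ : L →ₗ[R] A) ⊔ Submodule.span R {b | ∃ x ∈ X, b = φ x ^ p} ≤
      pEnvelope p φ.range := by
  rw [← LieHom.range_toSubmodule]
  refine sup_le (toSubmodule_le_pEnvelope p) (Submodule.span_le.2 ?_)
  rintro _ ⟨x, _, rfl⟩
  simpa only [pow_one, SetLike.mem_coe] using pow_mem_pEnvelope p (φ.mem_range_self x) 1

section CharP

variable [Fact p.Prime] [CharP R p]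

variable (R) in
theorem ad_pow_char_pow (a : A) (n : ℕ) :
    LieAlgebra.ad R A (a ^ p ^ n) = LieAlgebra.ad R A a ^ p ^ n := by
  cases subsingleton_or_nontrivial A
  · exact Subsingleton.elim _ _
  have natCast_eq_zero : (p : Module.End R A) = 0 := by
    rw [← map_natCast (algebraMap R (Module.End R A)), CharP.cast_eq_zero, map_zero]
  have : CharP (Module.End R A) p :=
    (CharP.charP_iff_prime_eq_zero Fact.out).2 natCast_eq_zero
  simp only [LieAlgebra.ad_eq_lmul_left_sub_lmul_right, Pi.sub_apply]
  rw [sub_pow_char_pow_of_commute p n (LinearMap.commute_mulLeft_right a a),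
    LinearMap.pow_mulLeft, LinearMap.pow_mulRight]

theorem pow_char_pow_lie_mem (ha : a ∈ K) (hf : f ∈ K.normalizer) (n : ℕ) :
    ⁅a ^ p ^ n, f⁆ ∈ K := by
  have hpn : p ^ n ≠ 0 := pow_ne_zero n (Fact.out : p.Prime).ne_zero
  have lie_mem : ⁅a, f⁆ ∈ K := (K.mem_normalizer_iff' f).1 hf a ha
  rw [← LieAlgebra.ad_apply R, ad_pow_char_pow, ← Nat.sub_one_add_one hpn, pow_succ,
    Module.End.mul_apply]
  exact Module.End.pow_apply_mem_of_forall_mem (p := K.toSubmodule) _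
    (fun _ hx => K.lie_mem ha hx) _ lie_mem

theorem lie_mem_of_mem_normalizer_of_mem_pEnvelope (hf : f ∈ K.normalizer)
    (hg : g ∈ pEnvelope p K) : ⁅f, g⁆ ∈ K := by
  suffices pEnvelope p K ≤ K.toSubmodule.comap (LieAlgebra.ad R A f : A →ₗ[R] A) from this hg
  refine Submodule.span_le.2 ?_
  rintro _ ⟨a, ha, n, rfl⟩
  have skew_mem : -⁅a ^ p ^ n, f⁆ ∈ K := neg_mem (pow_char_pow_lie_mem p ha hf n)
  rwa [lie_skew] at skew_mem

theorem pEnvelope_le_normalizer : pEnvelope p K ≤ K.normalizer.toSubmodule := fun g hg =>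
  (K.mem_normalizer_iff' g).2 fun _ hy =>
    lie_mem_of_mem_normalizer_of_mem_pEnvelope p (K.le_normalizer hy) hg

theorem bracket_of_adL_plus_squares_mem_adL_general (hf : f ∈ pEnvelope p K)
    (hg : g ∈ pEnvelope p K) : ⁅f, g⁆ ∈ K :=
  lie_mem_of_mem_normalizer_of_mem_pEnvelope p (pEnvelope_le_normalizer p hf) hg

end CharP

end pEnvelope

/-- Let `L` be a Lie algebra over a field `F` of characteristic `2` with a
`ℤ₂`-grading `L = L₀ ⊕ L₁`. With `C` the span of `{(ad x)² : x ∈ L₁}` in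
`End(L)` and `S = ad(L) + C`, one has `⁅S, S⁆ ⊆ ad(L)`; in particular `ad(L)`
is a Lie ideal of `S` with abelian quotient. -/
theorem bracket_of_adL_plus_squares_mem_adL
    {F : Type*} [Field F] [CharP F 2] {L : Type*} [LieRing L] [LieAlgebra F L]
    (L₀ L₁ : Submodule F L)
    (h_inf : L₀ ⊓ L₁ = ⊥) (h_sup : L₀ ⊔ L₁ = ⊤)
    (h00 : ∀ x ∈ L₀, ∀ y ∈ L₀, ⁅x, y⁆ ∈ L₀)
    (h01 : ∀ x ∈ L₀, ∀ y ∈ L₁, ⁅x, y⁆ ∈ L₁)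
    (h11 : ∀ x ∈ L₁, ∀ y ∈ L₁, ⁅x, y⁆ ∈ L₀)
    (C : Submodule F (Module.End F L))
    (hC : C = Submodule.span F {f | ∃ x ∈ L₁, f = (LieAlgebra.ad F L x) ^ 2})
    (S : Submodule F (Module.End F L))
    (hS : S = LinearMap.range (LieAlgebra.ad F L : L →ₗ[F] Module.End F L) ⊔ C) :
    ∀ f ∈ S, ∀ g ∈ S,
      ⁅f, g⁆ ∈ LinearMap.range (LieAlgebra.ad F L : L →ₗ[F] Module.End F L) := by
  subst hC hS
  have hle := range_sup_span_pow_le_pEnvelope 2 (LieAlgebra.ad F L) (L₁ : Set L)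
  exact fun f hf g hg => bracket_of_adL_plus_squares_mem_adL_general 2 (hle hf) (hle hg)
end

section
/- Let F be a field of characteristic 2 and let L be a finite-dimensional Lie algebra over F with trivial center and with a Z₂-grading L = L₀ ⊕ L₁. Let C denote the F-linear span in End(L) of {(ad x)² : x ∈ L₁}, and let S = ad(L) + C. Then dim_F S ≤ dim_F L + dim_F L₁; equivalently, the quotient space S / ad(L) has dimension at most dim_F L₁. -/
/-!
In characteristic 2, `(x + y)² = x² + y² + ⁅x, y⁆` in any associative algebra. Hence, for a Lie
subalgebra `N`, squaring becomes additive modulo `N`, and it is then a Frobenius-semilinear map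
`N → A ⧸ N`. The image of a semilinear map is spanned by the images of a basis, so the squares of
a subspace `W ≤ N` contribute at most `dim W` dimensions modulo `N`. The theorem is the case
`N = ad L`, `W = ad L₁`.
-/

open Cardinal

universe u v

section Rank

theorem lift_rank_span_range_le {R S : Type*} {V : Type u} {W : Type v} [Semiring R]
    [Semiring S] [StrongRankCondition R] [StrongRankCondition S] {σ : R →+* S} [AddCommMonoid V]
    [Module R V] [Module.Free R V] [AddCommMonoid W] [Module S W] (f : V →ₛₗ[σ] W) :
    lift.{u} (Module.rank S (Submodule.span S (Set.range f))) ≤ lift.{v} (Module.rank R V) := by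
  let b := Module.Free.chooseBasis R V
  have span_le : Submodule.span S (Set.range f) ≤ Submodule.span S (Set.range (f ∘ b)) := by
    rw [Submodule.span_le, ← Set.image_univ, ← Submodule.top_coe (R := R), ← b.span_eq,
      Set.range_comp]
    exact Submodule.image_span_subset_span f _
  calc lift.{u} (Module.rank S (Submodule.span S (Set.range f)))
      ≤ lift.{u} #(Set.range (f ∘ b)) :=
        lift_le.mpr ((Submodule.rank_mono span_le).trans (rank_span_le _))
    _ ≤ lift.{v} #(Module.Free.ChooseBasisIndex R V) := mk_range_le_lift
    _ = lift.{v} (Module.rank R V) := by rw [Module.Free.rank_eq_card_chooseBasisIndex]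

theorem rank_le_rank_add_rank_map_mkQ {R : Type*} {M : Type u} [Ring R] [HasRankNullity.{u} R]
    [AddCommGroup M] [Module R M] (N P : Submodule R M) :
    Module.rank R P ≤ Module.rank R N + Module.rank R (P.map N.mkQ) := by
  have ker_le : Module.rank R (N.mkQ.domRestrict P).ker ≤ Module.rank R N := by
    rw [LinearMap.ker_domRestrict, Submodule.ker_mkQ, (P.equivSubtypeMap _).rank_eq,
      Submodule.map_comap_subtype]
    exact Submodule.rank_mono inf_le_right
  rw [← LinearMap.rank_range_add_rank_ker (N.mkQ.domRestrict P), LinearMap.range_domRestrict,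
    add_comm]
  gcongr

end Rank

theorem add_sq_eq_sq_add_sq_add_lie {A : Type*} [Ring A] (x y : A) :
    (x + y) ^ 2 = x ^ 2 + y ^ 2 + ⁅x, y⁆ + 2 * (y * x) := by
  rw [Ring.lie_def]
  noncomm_ring

section Squares

attribute [local instance] LieRing.ofAssociativeRing

variable {R F : Type*} [CommRing R] [CharP R 2] [Field F] [CharP F 2]

/-- Squaring on a Lie subalgebra `N` of an associative algebra of characteristic 2, taken modulo
`N`. -/
def sqModSelf {A : Type*} [Ring A] [Algebra R A] (N : LieSubalgebra R A) :
    N →ₛₗ[frobenius R 2] A ⧸ N.toSubmodule where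
  toFun x := N.toSubmodule.mkQ ((x : A) ^ 2)
  map_add' x y := by
    have two_eq_zero : (2 : A) = 0 := by
      rw [← map_ofNat (algebraMap R A) 2, CharTwo.two_eq_zero, map_zero]
    have lie_eq_zero : N.toSubmodule.mkQ ⁅(x : A), (y : A)⁆ = 0 :=
      (Submodule.Quotient.mk_eq_zero _).mpr (N.lie_mem x.2 y.2)
    rw [AddMemClass.coe_add, add_sq_eq_sq_add_sq_add_lie, two_eq_zero, zero_mul, add_zero,
      map_add, map_add, lie_eq_zero, add_zero]
  map_smul' a x := by
    rw [SetLike.val_smul, smul_pow, map_smul, frobenius_def]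

theorem rank_map_mkQ_span_sq_le {A : Type u} [StrongRankCondition R] [Ring A] [Algebra R A]
    (N : LieSubalgebra R A) {W : Submodule R A} [Module.Free R W] (hW : W ≤ N.toSubmodule) :
    Module.rank R ((Submodule.span R ((· ^ 2) '' (W : Set A))).map N.toSubmodule.mkQ) ≤
      Module.rank R W := by
  let f : W →ₛₗ[frobenius R 2] A ⧸ N.toSubmodule := (sqModSelf N).comp (Submodule.inclusion hW)
  have image_eq_range : N.toSubmodule.mkQ '' ((· ^ 2) '' W) = Set.range f := by
    rw [Set.image_image, Set.image_eq_range]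
    rfl
  rw [Submodule.map_span, image_eq_range]
  simpa only [lift_id] using lift_rank_span_range_le f

theorem rank_sup_span_sq_le {A : Type u} [Ring A] [Algebra F A] (N : LieSubalgebra F A)
    {W : Submodule F A} (hW : W ≤ N.toSubmodule) :
    Module.rank F ↥(N.toSubmodule ⊔ Submodule.span F ((· ^ 2) '' (W : Set A))) ≤
      Module.rank F N + Module.rank F W := by
  refine (rank_le_rank_add_rank_map_mkQ N.toSubmodule _).trans ?_
  rw [Submodule.map_sup, Submodule.mkQ_map_self, bot_sup_eq]
  exact add_le_add_right (rank_map_mkQ_span_sq_le N hW) _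

theorem finrank_adL_plus_squares_le_general {L : Type u} [LieRing L] [LieAlgebra F L]
    {A : Type v} [Ring A] [Algebra F A] (ρ : L →ₗ⁅F⁆ A) (V : Submodule F L) :
    lift.{u} (Module.rank F
        ↥(LinearMap.range (ρ : L →ₗ[F] A) ⊔ Submodule.span F {a | ∃ x ∈ V, a = ρ x ^ 2})) ≤
      lift.{v} (Module.rank F L + Module.rank F V) := by
  have squares_eq : {a | ∃ x ∈ V, a = ρ x ^ 2} =
      (· ^ 2) '' (V.map (ρ : L →ₗ[F] A) : Set A) := by
    ext a
    simp [eq_comm]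
  have map_le_range : V.map (ρ : L →ₗ[F] A) ≤ ρ.range.toSubmodule := LinearMap.map_le_range
  calc _ ≤ lift.{u} (Module.rank F ρ.range + Module.rank F (V.map (ρ : L →ₗ[F] A))) := by
        rw [squares_eq]
        exact lift_le.mpr (rank_sup_span_sq_le ρ.range map_le_range)
    _ ≤ lift.{v} (Module.rank F L + Module.rank F V) := by
        rw [lift_add, lift_add]
        exact add_le_add (lift_rank_range_le (ρ : L →ₗ[F] A)) (lift_rank_map_le _ V)

end Squares

/-- Let `L` be a finite-dimensional Lie algebra over a field `F` of
characteristic `2`, with trivial center and a `ℤ₂`-grading `L = L₀ ⊕ L₁`.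
With `C` the span of `{(ad x)² : x ∈ L₁}` in `End(L)` and `S = ad(L) + C`,
one has `dim S ≤ dim L + dim L₁`. -/
theorem finrank_adL_plus_squares_le
    {F : Type*} [Field F] [CharP F 2] {L : Type*} [LieRing L] [LieAlgebra F L]
    [FiniteDimensional F L]
    (h_center : LieAlgebra.center F L = ⊥)
    (L₀ L₁ : Submodule F L)
    (h_inf : L₀ ⊓ L₁ = ⊥) (h_sup : L₀ ⊔ L₁ = ⊤)
    (h00 : ∀ x ∈ L₀, ∀ y ∈ L₀, ⁅x, y⁆ ∈ L₀)
    (h01 : ∀ x ∈ L₀, ∀ y ∈ L₁, ⁅x, y⁆ ∈ L₁)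
    (h11 : ∀ x ∈ L₁, ∀ y ∈ L₁, ⁅x, y⁆ ∈ L₀)
    (C : Submodule F (Module.End F L))
    (hC : C = Submodule.span F {f | ∃ x ∈ L₁, f = (LieAlgebra.ad F L x) ^ 2})
    (S : Submodule F (Module.End F L))
    (hS : S = LinearMap.range (LieAlgebra.ad F L : L →ₗ[F] Module.End F L) ⊔ C) :
    Module.finrank F S ≤ Module.finrank F L + Module.finrank F L₁ := by
  subst hC hS
  exact Module.finrank_le_of_rank_le (by
    simpa [← Module.finrank_eq_rank] using
      finrank_adL_plus_squares_le_general (LieAlgebra.ad F L) L₁)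
end

section
/- Let F be a field of characteristic 2 and let L be a Lie algebra over F with trivial center and with a Z₂-grading L = L₀ ⊕ L₁. Let C denote the F-linear span in End(L) of {(ad x)² : x ∈ L₁}. If x ∈ L₁ and ad(x) ∈ ad(L₀) + C, then x = 0; equivalently, setting S₀ = ad(L₀) + C and S₁ = ad(L₁), one has S₀ ∩ S₁ = {0}. -/
/-!
A linear map that both preserves and exchanges the two summands of `L₀ ⊕ L₁` sends each summand into
`L₀ ⊓ L₁ = 0`, so it vanishes. The maps in `ad(L₀)` preserve the summands and those in `ad(L₁)`
exchange them, so the squares spanning `C` preserve them again: `S₀` consists of even maps and `S₁`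
of odd ones. When the center is trivial, `ad` is injective, so `ad x = 0` forces `x = 0`.
-/

section EvenOdd

variable {R M N P : Type*} [CommSemiring R] [AddCommMonoid M] [Module R M] [AddCommMonoid N]
  [Module R N] [AddCommMonoid P] [Module R P] {M₀ M₁ : Submodule R M} {N₀ N₁ : Submodule R N}
  {P₀ P₁ : Submodule R P}

/-- The even maps between `ℤ₂`-graded modules: those sending `Mᵢ` into `Nᵢ`. The homogeneous
components are arbitrary submodules, with the direct sum condition left to the lemmas. -/
def evenMaps (M₀ M₁ : Submodule R M) (N₀ N₁ : Submodule R N) : Submodule R (M →ₗ[R] N) :=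
  Submodule.compatibleMaps M₀ N₀ ⊓ Submodule.compatibleMaps M₁ N₁

/-- The odd maps between `ℤ₂`-graded modules: those sending `Mᵢ` into `N₁₋ᵢ`. As in `evenMaps`, the
homogeneous components are arbitrary submodules. -/
def oddMaps (M₀ M₁ : Submodule R M) (N₀ N₁ : Submodule R N) : Submodule R (M →ₗ[R] N) :=
  Submodule.compatibleMaps M₀ N₁ ⊓ Submodule.compatibleMaps M₁ N₀

theorem mem_evenMaps {f : M →ₗ[R] N} :
    f ∈ evenMaps M₀ M₁ N₀ N₁ ↔ (∀ x ∈ M₀, f x ∈ N₀) ∧ ∀ x ∈ M₁, f x ∈ N₁ :=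
  Iff.rfl

theorem mem_oddMaps {f : M →ₗ[R] N} :
    f ∈ oddMaps M₀ M₁ N₀ N₁ ↔ (∀ x ∈ M₀, f x ∈ N₁) ∧ ∀ x ∈ M₁, f x ∈ N₀ :=
  Iff.rfl

theorem comp_mem_evenMaps_of_mem_oddMaps {g : N →ₗ[R] P} {f : M →ₗ[R] N}
    (hg : g ∈ oddMaps N₀ N₁ P₀ P₁) (hf : f ∈ oddMaps M₀ M₁ N₀ N₁) :
    g ∘ₗ f ∈ evenMaps M₀ M₁ P₀ P₁ := by
  rw [mem_oddMaps] at hg hf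
  exact mem_evenMaps.2 ⟨fun x hx => hg.2 _ (hf.1 x hx), fun x hx => hg.1 _ (hf.2 x hx)⟩

theorem disjoint_evenMaps_oddMaps (hM : Codisjoint M₀ M₁) (hN : Disjoint N₀ N₁) :
    Disjoint (evenMaps M₀ M₁ N₀ N₁) (oddMaps M₀ M₁ N₀ N₁) := by
  rw [Submodule.disjoint_def] at hN ⊢
  intro f hf_even hf_odd
  rw [mem_evenMaps] at hf_even
  rw [mem_oddMaps] at hf_odd
  exact LinearMap.ext_on_codisjoint hM (fun x hx => hN _ (hf_even.1 x hx) (hf_odd.1 x hx))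
    fun x hx => hN _ (hf_odd.2 x hx) (hf_even.2 x hx)

end EvenOdd

section Lie

variable {R L : Type*} [CommRing R] [LieRing L] [LieAlgebra R L] {L₀ L₁ : Submodule R L}

theorem ad_mem_evenMaps (h00 : ∀ x ∈ L₀, ∀ y ∈ L₀, ⁅x, y⁆ ∈ L₀)
    (h01 : ∀ x ∈ L₀, ∀ y ∈ L₁, ⁅x, y⁆ ∈ L₁) {x : L} (hx : x ∈ L₀) :
    LieAlgebra.ad R L x ∈ evenMaps L₀ L₁ L₀ L₁ :=
  mem_evenMaps.2 ⟨h00 x hx, h01 x hx⟩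

theorem ad_mem_oddMaps (h01 : ∀ x ∈ L₀, ∀ y ∈ L₁, ⁅x, y⁆ ∈ L₁)
    (h11 : ∀ x ∈ L₁, ∀ y ∈ L₁, ⁅x, y⁆ ∈ L₀) {x : L} (hx : x ∈ L₁) :
    LieAlgebra.ad R L x ∈ oddMaps L₀ L₁ L₀ L₁ := by
  refine mem_oddMaps.2 ⟨fun y hy => ?_, h11 x hx⟩
  rw [LieAlgebra.ad_apply, ← lie_skew]
  exact L₁.neg_mem (h01 y hy x hx)

theorem map_ad_sup_span_sq_ad_le_evenMaps (h00 : ∀ x ∈ L₀, ∀ y ∈ L₀, ⁅x, y⁆ ∈ L₀)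
    (h01 : ∀ x ∈ L₀, ∀ y ∈ L₁, ⁅x, y⁆ ∈ L₁) (h11 : ∀ x ∈ L₁, ∀ y ∈ L₁, ⁅x, y⁆ ∈ L₀) :
    Submodule.map (LieAlgebra.ad R L : L →ₗ[R] Module.End R L) L₀ ⊔
      Submodule.span R {f | ∃ x ∈ L₁, f = LieAlgebra.ad R L x ^ 2} ≤ evenMaps L₀ L₁ L₀ L₁ := by
  refine sup_le (Submodule.map_le_iff_le_comap.2 fun x hx => ad_mem_evenMaps h00 h01 hx)
    (Submodule.span_le.2 ?_)
  rintro _ ⟨x, hx, rfl⟩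
  have h_odd := ad_mem_oddMaps h01 h11 hx
  rw [pow_two, Module.End.mul_eq_comp]
  exact comp_mem_evenMaps_of_mem_oddMaps h_odd h_odd

theorem map_ad_le_oddMaps (h01 : ∀ x ∈ L₀, ∀ y ∈ L₁, ⁅x, y⁆ ∈ L₁)
    (h11 : ∀ x ∈ L₁, ∀ y ∈ L₁, ⁅x, y⁆ ∈ L₀) :
    Submodule.map (LieAlgebra.ad R L : L →ₗ[R] Module.End R L) L₁ ≤ oddMaps L₀ L₁ L₀ L₁ :=
  Submodule.map_le_iff_le_comap.2 fun _ hx => ad_mem_oddMaps h01 h11 hx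

end Lie

theorem grading_S0_inf_S1_eq_bot_general
    {R : Type*} [CommRing R] {L : Type*} [LieRing L] [LieAlgebra R L]
    (h_center : LieAlgebra.center R L = ⊥)
    (L₀ L₁ : Submodule R L)
    (h_inf : L₀ ⊓ L₁ = ⊥) (h_sup : L₀ ⊔ L₁ = ⊤)
    (h00 : ∀ x ∈ L₀, ∀ y ∈ L₀, ⁅x, y⁆ ∈ L₀)
    (h01 : ∀ x ∈ L₀, ∀ y ∈ L₁, ⁅x, y⁆ ∈ L₁)
    (h11 : ∀ x ∈ L₁, ∀ y ∈ L₁, ⁅x, y⁆ ∈ L₀)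
    (C : Submodule R (Module.End R L))
    (hC : C = Submodule.span R {f | ∃ x ∈ L₁, f = (LieAlgebra.ad R L x) ^ 2})
    (S₀ S₁ : Submodule R (Module.End R L))
    (hS₀ : S₀ = Submodule.map (LieAlgebra.ad R L : L →ₗ[R] Module.End R L) L₀ ⊔ C)
    (hS₁ : S₁ = Submodule.map (LieAlgebra.ad R L : L →ₗ[R] Module.End R L) L₁) :
    (∀ x ∈ L₁, LieAlgebra.ad R L x ∈ S₀ → x = 0) ∧ S₀ ⊓ S₁ = ⊥ := by
  subst hC hS₀ hS₁
  have h_parity : Disjoint (evenMaps L₀ L₁ L₀ L₁) (oddMaps L₀ L₁ L₀ L₁) :=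
    disjoint_evenMaps_oddMaps (codisjoint_iff.2 h_sup) (disjoint_iff.2 h_inf)
  have h_disjoint := h_parity.mono
    (map_ad_sup_span_sq_ad_le_evenMaps h00 h01 h11) (map_ad_le_oddMaps h01 h11)
  refine ⟨fun x hx hxS₀ => ?_, h_disjoint.eq_bot⟩
  have h_ad : LieAlgebra.ad R L x = 0 :=
    Submodule.disjoint_def.1 h_disjoint _ hxS₀ (Submodule.mem_map_of_mem hx)
  have h_faithful : LieModule.IsFaithful R L L := (LieAlgebra.isFaithful_self_iff R L).2 h_center
  exact (LieModule.toEnd_eq_zero_iff R L L).1 h_ad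

/-- Let `L` be a Lie algebra over a field `F` of characteristic `2` with trivial
center and a `ℤ₂`-grading `L = L₀ ⊕ L₁`. With `C` the span of
`{(ad x)² : x ∈ L₁}` in `End(L)`, `S₀ = ad(L₀) + C` and `S₁ = ad(L₁)`, one has:
if `x ∈ L₁` and `ad x ∈ S₀` then `x = 0`; equivalently `S₀ ∩ S₁ = {0}`. -/
theorem grading_S0_inf_S1_eq_bot
    {F : Type*} [Field F] [CharP F 2] {L : Type*} [LieRing L] [LieAlgebra F L]
    (h_center : LieAlgebra.center F L = ⊥)
    (L₀ L₁ : Submodule F L)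
    (h_inf : L₀ ⊓ L₁ = ⊥) (h_sup : L₀ ⊔ L₁ = ⊤)
    (h00 : ∀ x ∈ L₀, ∀ y ∈ L₀, ⁅x, y⁆ ∈ L₀)
    (h01 : ∀ x ∈ L₀, ∀ y ∈ L₁, ⁅x, y⁆ ∈ L₁)
    (h11 : ∀ x ∈ L₁, ∀ y ∈ L₁, ⁅x, y⁆ ∈ L₀)
    (C : Submodule F (Module.End F L))
    (hC : C = Submodule.span F {f | ∃ x ∈ L₁, f = (LieAlgebra.ad F L x) ^ 2})
    (S₀ S₁ : Submodule F (Module.End F L))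
    (hS₀ : S₀ = Submodule.map (LieAlgebra.ad F L : L →ₗ[F] Module.End F L) L₀ ⊔ C)
    (hS₁ : S₁ = Submodule.map (LieAlgebra.ad F L : L →ₗ[F] Module.End F L) L₁) :
    (∀ x ∈ L₁, LieAlgebra.ad F L x ∈ S₀ → x = 0) ∧ S₀ ⊓ S₁ = ⊥ :=
  grading_S0_inf_S1_eq_bot_general h_center L₀ L₁ h_inf h_sup h00 h01 h11 C hC S₀ S₁ hS₀ hS₁
end

section
/- Let F be a field of characteristic 2 and let L be a Lie algebra over F with a Z₂-grading L = L₀ ⊕ L₁. Let C denote the F-linear span in End(L) of {(ad x)² : x ∈ L₁}, and set S₀ = ad(L₀) + C and S₁ = ad(L₁) as subspaces of End(L). Then the commutator bracket of End(L) satisfies ⁅S₀, S₀⁆ ⊆ S₀, ⁅S₀, S₁⁆ ⊆ S₁, and ⁅S₁, S₁⁆ ⊆ S₀; in particular S₀ + S₁ = ad(L) + C is closed under the bracket. -/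
/-!
In characteristic `2` the square of a derivation is again a derivation, so every `f` in `S₀` is a
derivation of `L` preserving both `L₀` and `L₁`. Any derivation satisfies `⁅f, ad y⁆ = ad (f y)`,
and with `z = f x` this polarises to `⁅f, (ad x)²⁆ = (ad (z + x))² - (ad z)² - (ad x)²`.
-/

section Derivations

attribute [local instance] LieRing.ofAssociativeRing

variable {R L : Type*} [CommRing R] [LieRing L] [LieAlgebra R L]

theorem lieDerivation_iterate_char_apply_lie (p : ℕ) [Fact p.Prime] [CharP R p]
    (D : LieDerivation R L L) (a b : L) : D^[p] ⁅a, b⁆ = ⁅a, D^[p] b⁆ + ⁅D^[p] a, b⁆ := by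
  have hp : p.Prime := Fact.out
  have choose_smul_eq_zero (i : ℕ) (hi : i ∈ Finset.range (p + 1)) (hi' : i ≠ 0 ∧ i ≠ p) :
      p.choose i • ⁅D^[i] a, D^[p - i] b⁆ = 0 := by
    have hip : i < p := by grind
    rw [← Nat.cast_smul_eq_nsmul R,
      (CharP.cast_eq_zero_iff R p _).2 (hp.dvd_choose_self hi'.1 hip), zero_smul]
  rw [D.iterate_apply_lie' p, Finset.sum_eq_add_of_mem 0 p (by simp) (by simp) hp.ne_zero.symm
    choose_smul_eq_zero]
  simp

/-- The `p`-th power of a derivation of a Lie algebra of characteristic `p`, as a derivation. -/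
def lieDerivationPowChar (p : ℕ) [Fact p.Prime] [CharP R p] (D : LieDerivation R L L) :
    LieDerivation R L L where
  __ := (D : Module.End R L) ^ p
  leibniz' a b := by
    have h := lieDerivation_iterate_char_apply_lie p D a b
    rw [← lie_skew b, sub_neg_eq_add]
    simpa [Module.End.pow_apply] using h

theorem lie_toLinearMap_ad (D : LieDerivation R L L) (x : L) :
    ⁅(D : Module.End R L), LieAlgebra.ad R L x⁆ = LieAlgebra.ad R L (D x) := by
  rw [← LieDerivation.coe_ad_apply_eq_ad_apply, ← LieDerivation.commutator_coe_linear_map,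
    LieDerivation.lie_der_ad_eq_ad_der, LieDerivation.coe_ad_apply_eq_ad_apply]

/-- The derivations of `L` that preserve the submodule `V`, as a submodule of `End(L)`. -/
def stableDerivations (V : Submodule R L) : Submodule R (Module.End R L) :=
  (LieDerivation.toLinearMapLieHom R L : LieDerivation R L L →ₗ[R] Module.End R L).range ⊓
    V.compatibleMaps V

theorem mem_stableDerivations {V : Submodule R L} {f : Module.End R L} :
    f ∈ stableDerivations V ↔
      (∃ D : LieDerivation R L L, (D : Module.End R L) = f) ∧ ∀ x ∈ V, f x ∈ V :=
  Iff.rfl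

/-- The span in `End(L)` of the squares `(ad x)²` with `x ∈ V`; for `V = L₁` it is the `C` of the
superization. -/
def adSqSpan (V : Submodule R L) : Submodule R (Module.End R L) :=
  Submodule.span R {f | ∃ x ∈ V, f = LieAlgebra.ad R L x ^ 2}

theorem ad_sq_mem_adSqSpan {V : Submodule R L} {x : L} (hx : x ∈ V) :
    LieAlgebra.ad R L x ^ 2 ∈ adSqSpan V :=
  Submodule.subset_span ⟨x, hx, rfl⟩

theorem map_ad_le_stableDerivations {U V : Submodule R L} (h : ∀ x ∈ U, ∀ y ∈ V, ⁅x, y⁆ ∈ V) :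
    U.map (LieAlgebra.ad R L : L →ₗ[R] Module.End R L) ≤ stableDerivations V := by
  rintro _ ⟨x, hx, rfl⟩
  exact mem_stableDerivations.2
    ⟨⟨LieDerivation.ad R L x, LieDerivation.coe_ad_apply_eq_ad_apply x⟩, h x hx⟩

theorem adSqSpan_le_stableDerivations [CharP R 2] {U V : Submodule R L}
    (h : ∀ x ∈ U, ∀ y ∈ V, ⁅x, ⁅x, y⁆⁆ ∈ V) : adSqSpan U ≤ stableDerivations V := by
  refine Submodule.span_le.2 ?_
  rintro _ ⟨x, hx, rfl⟩
  refine mem_stableDerivations.2 ⟨⟨lieDerivationPowChar 2 (LieDerivation.ad R L x), ?_⟩, ?_⟩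
  · rw [← LieDerivation.coe_ad_apply_eq_ad_apply]
    rfl
  · simpa [pow_two] using h x hx

theorem lie_mem_map_ad {V : Submodule R L} {f g : Module.End R L} (hf : f ∈ stableDerivations V)
    (hg : g ∈ V.map (LieAlgebra.ad R L : L →ₗ[R] Module.End R L)) :
    ⁅f, g⁆ ∈ V.map (LieAlgebra.ad R L : L →ₗ[R] Module.End R L) := by
  obtain ⟨⟨D, rfl⟩, hV⟩ := mem_stableDerivations.1 hf
  obtain ⟨x, hx, rfl⟩ := hg
  exact ⟨D x, hV x hx, (lie_toLinearMap_ad D x).symm⟩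

theorem lie_sq_eq_add_sq_sub_sq_sub_sq {A : Type*} [Ring A] (a b : A) :
    ⁅a, b ^ 2⁆ = (⁅a, b⁆ + b) ^ 2 - ⁅a, b⁆ ^ 2 - b ^ 2 := by
  simp only [Ring.lie_def]
  noncomm_ring

theorem lie_ad_sq_mem_adSqSpan {V : Submodule R L} {f : Module.End R L}
    (hf : f ∈ stableDerivations V) {x : L} (hx : x ∈ V) :
    ⁅f, LieAlgebra.ad R L x ^ 2⁆ ∈ adSqSpan V := by
  obtain ⟨⟨D, rfl⟩, hV⟩ := mem_stableDerivations.1 hf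
  have hDx : D x ∈ V := hV x hx
  rw [lie_sq_eq_add_sq_sub_sq_sub_sq, lie_toLinearMap_ad, ← map_add]
  exact sub_mem (sub_mem (ad_sq_mem_adSqSpan (V.add_mem hDx hx)) (ad_sq_mem_adSqSpan hDx))
    (ad_sq_mem_adSqSpan hx)

theorem lie_mem_adSqSpan {V : Submodule R L} {f g : Module.End R L}
    (hf : f ∈ stableDerivations V) (hg : g ∈ adSqSpan V) : ⁅f, g⁆ ∈ adSqSpan V := by
  suffices adSqSpan V ≤ (adSqSpan V).comap (LieAlgebra.ad R (Module.End R L) f) from this hg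
  refine Submodule.span_le.2 ?_
  rintro _ ⟨x, hx, rfl⟩
  exact lie_ad_sq_mem_adSqSpan hf hx

theorem superization_grading_bracket_rules_general [CharP R 2] (L₀ L₁ : Submodule R L)
    (h00 : ∀ x ∈ L₀, ∀ y ∈ L₀, ⁅x, y⁆ ∈ L₀)
    (h01 : ∀ x ∈ L₀, ∀ y ∈ L₁, ⁅x, y⁆ ∈ L₁)
    (h11 : ∀ x ∈ L₁, ∀ y ∈ L₁, ⁅x, y⁆ ∈ L₀)
    (S₀ S₁ : Submodule R (Module.End R L))
    (hS₀ : S₀ = L₀.map (LieAlgebra.ad R L : L →ₗ[R] Module.End R L) ⊔ adSqSpan L₁)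
    (hS₁ : S₁ = L₁.map (LieAlgebra.ad R L : L →ₗ[R] Module.End R L)) :
    (∀ f ∈ S₀, ∀ g ∈ S₀, ⁅f, g⁆ ∈ S₀) ∧
    (∀ f ∈ S₀, ∀ g ∈ S₁, ⁅f, g⁆ ∈ S₁) ∧
    (∀ f ∈ S₁, ∀ g ∈ S₁, ⁅f, g⁆ ∈ S₀) := by
  subst hS₀ hS₁
  have h10 : ∀ x ∈ L₁, ∀ y ∈ L₀, ⁅x, y⁆ ∈ L₁ := fun x hx y hy ↦
    lie_skew x y ▸ L₁.neg_mem (h01 y hy x hx)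
  have hL₀ := sup_le (map_ad_le_stableDerivations h00)
    (adSqSpan_le_stableDerivations fun x hx y hy ↦ h11 x hx _ (h10 x hx y hy))
  have hL₁ := sup_le (map_ad_le_stableDerivations h01)
    (adSqSpan_le_stableDerivations fun x hx y hy ↦ h10 x hx _ (h11 x hx y hy))
  refine ⟨fun f hf g hg ↦ ?_, fun f hf g hg ↦ lie_mem_map_ad (hL₁ hf) hg, ?_⟩
  · obtain ⟨a, ha, c, hc, rfl⟩ := Submodule.mem_sup.1 hg
    rw [lie_add]
    exact Submodule.add_mem_sup (lie_mem_map_ad (hL₀ hf) ha) (lie_mem_adSqSpan (hL₁ hf) hc)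
  · rintro _ ⟨x, hx, rfl⟩ _ ⟨y, hy, rfl⟩
    exact Submodule.mem_sup_left ⟨⁅x, y⁆, h11 x hx y hy, LieHom.map_lie _ x y⟩

end Derivations

/-- Let `L` be a Lie algebra over a field `F` of characteristic `2` with a
`ℤ₂`-grading `L = L₀ ⊕ L₁`. With `C` the span of `{(ad x)² : x ∈ L₁}` in
`End(L)`, `S₀ = ad(L₀) + C` and `S₁ = ad(L₁)`, the commutator bracket of
`End(L)` satisfies `⁅S₀,S₀⁆ ⊆ S₀`, `⁅S₀,S₁⁆ ⊆ S₁` and `⁅S₁,S₁⁆ ⊆ S₀`. -/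
theorem superization_grading_bracket_rules
    {F : Type*} [Field F] [CharP F 2] {L : Type*} [LieRing L] [LieAlgebra F L]
    (L₀ L₁ : Submodule F L)
    (h_inf : L₀ ⊓ L₁ = ⊥) (h_sup : L₀ ⊔ L₁ = ⊤)
    (h00 : ∀ x ∈ L₀, ∀ y ∈ L₀, ⁅x, y⁆ ∈ L₀)
    (h01 : ∀ x ∈ L₀, ∀ y ∈ L₁, ⁅x, y⁆ ∈ L₁)
    (h11 : ∀ x ∈ L₁, ∀ y ∈ L₁, ⁅x, y⁆ ∈ L₀)
    (C : Submodule F (Module.End F L))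
    (hC : C = Submodule.span F {f | ∃ x ∈ L₁, f = (LieAlgebra.ad F L x) ^ 2})
    (S₀ S₁ : Submodule F (Module.End F L))
    (hS₀ : S₀ = Submodule.map (LieAlgebra.ad F L : L →ₗ[F] Module.End F L) L₀ ⊔ C)
    (hS₁ : S₁ = Submodule.map (LieAlgebra.ad F L : L →ₗ[F] Module.End F L) L₁) :
    (∀ f ∈ S₀, ∀ g ∈ S₀, ⁅f, g⁆ ∈ S₀) ∧
    (∀ f ∈ S₀, ∀ g ∈ S₁, ⁅f, g⁆ ∈ S₁) ∧
    (∀ f ∈ S₁, ∀ g ∈ S₁, ⁅f, g⁆ ∈ S₀) := by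
  subst hC
  exact superization_grading_bracket_rules_general L₀ L₁ h00 h01 h11 S₀ S₁ hS₀ hS₁
end
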